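/- Set SG^j(E) = G^j(E) ∩ SL_n(E'). For every x ∈ X^j one has SG^j(E)·x = {x' ∈ G^j(E)·x : det x' = det x}. In particular, in the orthogonal case (F' = F, τ = id, ε = 1) one has SG^j(E)·x = G^j(E)·x. -/

import Mathlib

open Matrix

namespace GaloisPair

variable {E' : Type} [Field E']

/-- `g ∈ G^j(E) = {g ∈ GL_n(E') : τ(g)ᵀ j g = j}`. -/
def Gj {n : ℕ} (τ : E' → E') (j g : Matrix (Fin n) (Fin n) E') : Prop :=
  IsUnit g ∧ (g.map τ)ᵀ * j * g = j

/-- `x ∈ X^j = {x ∈ G^j(E) : x·σ(x) = 1}`. -/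
def Xj {n : ℕ} (σ τ : E' → E') (j x : Matrix (Fin n) (Fin n) E') : Prop :=
  Gj τ j x ∧ x * x.map σ = 1

/-- `x'` lies in the `G^j(E)`-orbit of `x` for twisted conjugation `g·x = g x σ(g)⁻¹`. -/
def orbGj {n : ℕ} (σ τ : E' → E') (j x x' : Matrix (Fin n) (Fin n) E') : Prop :=
  ∃ g, Gj τ j g ∧ x' = g * x * (g.map σ)⁻¹

/-- `x'` lies in the `SG^j(E) = G^j(E) ∩ SL_n(E')`-orbit of `x`. -/
def orbSGj {n : ℕ} (σ τ : E' → E') (j x x' : Matrix (Fin n) (Fin n) E') : Prop :=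
  ∃ g, Gj τ j g ∧ g.det = 1 ∧ x' = g * x * (g.map σ)⁻¹

end GaloisPair

open GaloisPair

/-!
Twisted conjugation by `g` multiplies the determinant by `det g / σ(det g)`, so `x` and `g · x` have
the same determinant exactly when `σ` fixes `det g`. The point is then to correct `g` by an element
of `G^j(E)` that stabilizes `x` and has determinant `(det g)⁻¹`.

Since `x σ(x) = 1`, the fixed vectors of `v ↦ x σ(v)` span `E'ⁿ`. If some fixed `v` is anisotropic
for the form `B(u, v) = τ(u)ᵀ j v`, the quasi-reflection scaling `v` by `(det g)⁻¹` is such an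
element. Otherwise polarization shows that `τ` is trivial on the fixed field of `σ`; hence `τ = 1`,
the form is alternating, and every isometry already has determinant one.
-/

namespace GaloisPair

section RingInvolution

variable {R : Type*} [CommRing R] [IsDomain R]

theorem eq_id_or_eq_of_forall_fixed {σ τ : R →+* R} (hσ : Function.Involutive σ)
    (hτ : ∀ a, σ a = a → τ a = a) : τ = RingHom.id R ∨ τ = σ := by
  -- `e` and `σ e` are the roots of a polynomial whose coefficients are fixed by `σ`.
  have hroot (e : R) : τ e = e ∨ τ e = σ e := by
    have hsum := hτ (e + σ e) (by rw [map_add, hσ, add_comm])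
    have hprod := hτ (e * σ e) (by rw [map_mul, hσ, mul_comm])
    rw [map_add] at hsum
    rw [map_mul] at hprod
    have : (τ e - e) * (τ e - σ e) = 0 := by linear_combination τ e * hsum - hprod
    simpa only [mul_eq_zero, sub_eq_zero] using this
  -- An additive group is not the union of two proper subgroups.
  by_contra! hne
  obtain ⟨a, ha⟩ : ∃ a, τ a ≠ a := not_forall.1 fun h ↦ hne.1 (RingHom.ext h)
  obtain ⟨b, hb⟩ : ∃ b, τ b ≠ σ b := not_forall.1 fun h ↦ hne.2 (RingHom.ext h)
  have ha' := (hroot a).resolve_left ha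
  have hb' := (hroot b).resolve_right hb
  rcases hroot (a + b) with h | h <;> rw [map_add] at h
  · exact ha (by linear_combination h - hb')
  · rw [map_add] at h
    exact hb (by linear_combination h - ha')

end RingInvolution

section Alternating

variable {K V : Type*} [Field K] [AddCommGroup V] [Module K V] {B : LinearMap.BilinForm K V}

theorem det_mul_det_eq_det_of_forall_apply [FiniteDimensional K V] (hB : B.SeparatingLeft)
    {f g h : V →ₗ[K] V} (hfgh : ∀ u v, B (f u) (g v) = B u (h v)) :
    LinearMap.det f * LinearMap.det g = LinearMap.det h := by
  let b := Module.finBasis K V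
  have hdet : (LinearMap.toMatrix₂ b b B).det ≠ 0 :=
    (LinearMap.separatingLeft_iff_det_ne_zero b).1 hB
  have hcomp : B.compl₁₂ f g = B.compl₁₂ LinearMap.id h := LinearMap.ext₂ hfgh
  have hmat := congrArg (fun C ↦ (LinearMap.toMatrix₂ b b C).det) hcomp
  simp only [LinearMap.toMatrix₂_compl₁₂ b b, det_mul, det_transpose, LinearMap.det_toMatrix,
    LinearMap.det_id, one_mul] at hmat
  exact mul_right_cancel₀ hdet (by linear_combination hmat)

theorem isOrthogonal_transvection (hB : B.IsAlt) (v : V) :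
    B.IsOrthogonal (LinearMap.transvection (B v) v) := by
  intro x y
  simp only [LinearMap.transvection.apply, map_add, map_smul, LinearMap.add_apply,
    LinearMap.smul_apply, smul_eq_mul, hB v, ← LinearMap.IsAlt.neg hB v x]
  ring

theorem ker_transvection_comp_add_one_lt {g : V →ₗ[K] V} (hg : B.IsOrthogonal g) {v w : V}
    (hw : g w = -w) (hvw : B v w ≠ 0) :
    LinearMap.ker (LinearMap.transvection (B v) v ∘ₗ g + 1) < LinearMap.ker (g + 1) := by
  have happly (u : V) :
      (LinearMap.transvection (B v) v ∘ₗ g + 1) u = (g + 1) u + B v (g u) • v := by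
    simp only [LinearMap.add_apply, LinearMap.comp_apply, LinearMap.transvection.apply,
      Module.End.one_apply]
    abel
  have hortho (u : V) : B ((g + 1) u) w = 0 := by
    have h := hg u w
    rw [hw, map_neg] at h
    simp only [LinearMap.add_apply, Module.End.one_apply, map_add]
    rw [← h, add_neg_cancel]
  have hv0 : v ≠ 0 := fun h ↦ hvw (by simp [h])
  refine SetLike.lt_iff_le_and_exists.2 ⟨fun u hu ↦ ?_, w, ?_, fun hmem ↦ ?_⟩
  · rw [LinearMap.mem_ker, happly] at hu
    have hcoeff : B v (g u) * B v w = 0 := by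
      have h := congrArg (B · w) hu
      rwa [map_add, LinearMap.add_apply, hortho, zero_add, map_smul, map_zero] at h
    rwa [(mul_eq_zero.1 hcoeff).resolve_right hvw, zero_smul, add_zero] at hu
  · simp [hw]
  · rw [LinearMap.mem_ker, happly] at hmem
    simp [hw, hvw, hv0] at hmem

/- Composing `g` with a transvection along a vector not orthogonal to a `(-1)`-eigenvector lowers
the dimension of `ker (g + 1)`; once `g + 1` is invertible, `B ((g + 1) u) (g v) = B u ((g + 1) v)`
forces `det g = 1`. -/
theorem det_eq_one_of_isAlt [FiniteDimensional K V] (hB : B.IsAlt) (hBs : B.SeparatingLeft)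
    {g : V →ₗ[K] V} (hg : B.IsOrthogonal g) : LinearMap.det g = 1 := by
  induction hd : Module.finrank K (LinearMap.ker (g + 1)) using Nat.strong_induction_on
    generalizing g with
  | _ d ih =>
  by_cases hker : LinearMap.ker (g + 1) = ⊥
  · have hadj : LinearMap.det (g + 1) * LinearMap.det g = LinearMap.det (g + 1) :=
      det_mul_det_eq_det_of_forall_apply hBs fun u v ↦ by
        simp only [LinearMap.add_apply, Module.End.one_apply, map_add, hg u v]
        exact add_comm _ _
    have hdet : LinearMap.det (g + 1) ≠ 0 := fun h ↦
      (LinearMap.bot_lt_ker_of_det_eq_zero h).ne' hker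
    exact mul_left_cancel₀ hdet (by rw [hadj, mul_one])
  · obtain ⟨w, hw, hw0⟩ := Submodule.exists_mem_ne_zero_of_ne_bot hker
    have hgw : g w = -w := eq_neg_of_add_eq_zero_left hw
    obtain ⟨v, hv⟩ : ∃ v, B w v ≠ 0 := not_forall.1 fun h ↦ hw0 (hBs w h)
    have hvw : B v w ≠ 0 := fun h ↦ hv (hB.isRefl v w h)
    have htg : B.IsOrthogonal (LinearMap.transvection (B v) v ∘ₗ g) := fun x y ↦
      (isOrthogonal_transvection hB v (g x) (g y)).trans (hg x y)
    have hlt := Submodule.finrank_lt_finrank_of_lt (ker_transvection_comp_add_one_lt hg hgw hvw)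
    simpa [LinearMap.det_comp, hB v] using ih _ (hd ▸ hlt) htg rfl

theorem isAlt_of_span_eq_top {s : Set V} (hs : Submodule.span K s = ⊤)
    (hself : ∀ v ∈ s, B v v = 0) (hskew : ∀ u ∈ s, ∀ v ∈ s, B u v + B v u = 0) : B.IsAlt := by
  have hflip : B + B.flip = 0 :=
    LinearMap.ext_on hs fun u hu ↦ LinearMap.ext_on hs fun v hv ↦ hskew u hu v hv
  intro v
  induction hs.ge (Submodule.mem_top (x := v)) using Submodule.span_induction with
  | mem v hv => exact hself v hv
  | zero => simp
  | add u v _ _ hu hv => simpa [hu, hv, add_comm] using LinearMap.congr_fun₂ hflip u v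
  | smul a v _ hv => simp [hv]

end Alternating

section QuasiReflection

variable {K V : Type*} [Field K] [AddCommGroup V] [Module K V] {τ : K →+* K}

/-- The quasi-reflection scaling an anisotropic vector `v` by `c` and fixing the `B`-orthogonal
complement of `v`. -/
def quasiReflection (B : V →ₛₗ[τ] V →ₗ[K] K) (v : V) (c : K) : V →ₗ[K] V :=
  LinearMap.transvection (((c - 1) / B v v) • B v) v

variable {B : V →ₛₗ[τ] V →ₗ[K] K} {v : V}

theorem quasiReflection_apply (c : K) (u : V) :
    quasiReflection B v c u = u + ((c - 1) / B v v * B v u) • v := rfl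

theorem det_quasiReflection [FiniteDimensional K V] (hv : B v v ≠ 0) (c : K) :
    LinearMap.det (quasiReflection B v c) = c := by
  simp [quasiReflection, hv]

theorem apply_quasiReflection_quasiReflection {ε : K} (hB : ∀ u v, τ (B u v) = ε * B v u)
    (hv : B v v ≠ 0) {c : K} (hc : τ c * c = 1) (x y : V) :
    B (quasiReflection B v c x) (quasiReflection B v c y) = B x y := by
  have hε : ε ≠ 0 := left_ne_zero_of_mul (hB v v ▸ (map_ne_zero τ).2 hv)
  have hcoeff : τ ((c - 1) / B v v * B v x) = (τ c - 1) / B v v * B x v := by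
    rw [map_mul, map_div₀, hB, hB, map_sub, map_one]
    field_simp
  simp only [quasiReflection_apply, map_add, LinearMap.map_smulₛₗ, LinearMap.add_apply,
    LinearMap.smul_apply, smul_eq_mul, hcoeff, RingHom.id_apply]
  field_simp
  linear_combination B x v * B v y * hc

theorem quasiReflection_apply_fixed {σ : K →+* K} {S : V →ₛₗ[σ] V}
    (hS : ∀ u v, B (S u) (S v) = σ (B u v)) (hv : S v = v) {c : K} (hc : σ c = c) (u : V) :
    quasiReflection B v c (S u) = S (quasiReflection B v c u) := by
  have hBv (u : V) : σ (B v u) = B v (S u) := by rw [← hS, hv]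
  simp only [quasiReflection_apply, map_add, LinearMap.map_smulₛₗ, map_mul, map_div₀, map_sub,
    map_one, hBv, hv, hc]

end QuasiReflection

section Descent

variable {K V : Type*} [Field K] [AddCommGroup V] [Module K V] {σ τ : K →+* K} {S : V →ₛₗ[σ] V}
  {B : V →ₛₗ[τ] V →ₗ[K] K}

theorem span_fixed_eq_top (hσ : Function.Involutive σ) (hσ1 : σ ≠ RingHom.id K)
    (hS : Function.Involutive S) : Submodule.span K {v | S v = v} = ⊤ := by
  obtain ⟨b, hb⟩ : ∃ b, σ b ≠ b := not_forall.1 fun h ↦ hσ1 (RingHom.ext h)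
  have hb' : b - σ b ≠ 0 := sub_ne_zero.2 hb.symm
  refine eq_top_iff.2 fun w _ ↦ ?_
  have htrace : w + S w ∈ {v | S v = v} := by simp [hS w, add_comm]
  have htrace_smul : b • w + σ b • S w ∈ {v | S v = v} := by simp [hS w, hσ b, add_comm]
  have hw : w = (b - σ b)⁻¹ • ((b • w + σ b • S w) - σ b • (w + S w)) := by
    rw [eq_inv_smul_iff₀ hb']
    module
  rw [hw]
  exact Submodule.smul_mem _ _ (Submodule.sub_mem _ (Submodule.subset_span htrace_smul)
    (Submodule.smul_mem _ _ (Submodule.subset_span htrace)))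

theorem apply_add_apply_swap_eq_zero_of_fixed (hB : ∀ v, S v = v → B v v = 0) {u v : V}
    (hu : S u = u) (hv : S v = v) : B u v + B v u = 0 := by
  simpa [hB u hu, hB v hv, add_comm] using hB (u + v) (by rw [map_add, hu, hv])

theorem eq_zero_of_forall_fixed_self_eq_zero (hσ : Function.Involutive σ)
    (hσ1 : σ ≠ RingHom.id K) (hS : Function.Involutive S) (hB : ∀ v, S v = v → B v v = 0) {a : K}
    (ha : σ a = a) (hτa : τ a ≠ a) : B = 0 := by
  have hspan := span_fixed_eq_top hσ hσ1 hS
  refine LinearMap.ext_on hspan fun u hu ↦ LinearMap.ext_on hspan fun v hv ↦ ?_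
  have hskew := apply_add_apply_swap_eq_zero_of_fixed hB hu hv
  have hskew_smul : τ a * B u v + a * B v u = 0 := by
    simpa using apply_add_apply_swap_eq_zero_of_fixed hB
      (show S (a • u) = a • u by rw [LinearMap.map_smulₛₗ, ha, hu]) hv
  have : (τ a - a) * B u v = 0 := by linear_combination hskew_smul - a * hskew
  exact (mul_eq_zero.1 this).resolve_left (sub_ne_zero.2 hτa)

theorem eq_id_and_isAlt_of_forall_fixed_self_eq_zero (hσ : Function.Involutive σ)
    (hσ1 : σ ≠ RingHom.id K) (hτσ : τ ≠ σ) (hS : Function.Involutive S) (hB0 : B ≠ 0)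
    (hB : ∀ v, S v = v → B v v = 0) : τ = RingHom.id K ∧ B.IsAlt := by
  have hτ : τ = RingHom.id K := by
    refine (eq_id_or_eq_of_forall_fixed hσ fun a ha ↦ ?_).resolve_right hτσ
    by_contra hτa
    exact hB0 (eq_zero_of_forall_fixed_self_eq_zero hσ hσ1 hS hB ha hτa)
  subst hτ
  exact ⟨rfl, isAlt_of_span_eq_top (span_fixed_eq_top hσ hσ1 hS) hB
    fun _ hu _ hv ↦ apply_add_apply_swap_eq_zero_of_fixed hB hu hv⟩

end Descent

section Matrices

variable {K ι : Type*} [Field K] [Fintype ι]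

theorem map_mulVec_comp {σ : K →+* K} (x : Matrix ι ι K) (v : ι → K) :
    σ ∘ (x *ᵥ v) = x.map σ *ᵥ (σ ∘ v) :=
  funext (RingHom.map_mulVec σ x v)

/-- The `σ`-semilinear map `v ↦ x σ(v)` of `Kⁿ`. It is an involution when `x σ(x) = 1`, and its
fixed vectors then form a `K^σ`-form of `Kⁿ`. -/
def twistedMulVec (σ : K →+* K) (x : Matrix ι ι K) : (ι → K) →ₛₗ[σ] (ι → K) where
  toFun v := x *ᵥ (σ ∘ v)
  map_add' u v := by
    rw [← mulVec_add]
    exact congrArg (x *ᵥ ·) (funext fun i ↦ map_add σ (u i) (v i))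
  map_smul' a v := by
    rw [← mulVec_smul]
    exact congrArg (x *ᵥ ·) (funext fun i ↦ map_mul σ a (v i))

theorem twistedMulVec_apply (σ : K →+* K) (x : Matrix ι ι K) (v : ι → K) :
    twistedMulVec σ x v = x *ᵥ (σ ∘ v) := rfl

variable [DecidableEq ι]

theorem involutive_twistedMulVec {σ : K →+* K} (hσ : Function.Involutive σ) {x : Matrix ι ι K}
    (hx : x * x.map σ = 1) : Function.Involutive (twistedMulVec σ x) := fun v ↦ by
  have hv : σ ∘ (σ ∘ v) = v := funext fun i ↦ hσ (v i)
  rw [twistedMulVec_apply, twistedMulVec_apply, map_mulVec_comp, hv, mulVec_mulVec, hx, one_mulVec]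

/-- The `τ`-sesquilinear form `(u, v) ↦ τ(u)ᵀ j v` on `Kⁿ`. -/
abbrev sesqForm (τ : K →+* K) (j : Matrix ι ι K) : (ι → K) →ₛₗ[τ] (ι → K) →ₗ[K] K :=
  toLinearMapₛₗ₂' K τ (RingHom.id K) j

theorem sesqForm_apply (τ : K →+* K) (j : Matrix ι ι K) (u v : ι → K) :
    sesqForm τ j u v = (τ ∘ u) ⬝ᵥ j *ᵥ v := by
  simp only [toLinearMapₛₗ₂'_apply, dotProduct, mulVec, Finset.mul_sum, smul_eq_mul,
    RingHom.id_apply, Function.comp_apply, mul_comm (v _)]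

theorem sesqForm_mulVec_mulVec (τ : K →+* K) (j g : Matrix ι ι K) (u v : ι → K) :
    sesqForm τ j (g *ᵥ u) (g *ᵥ v) = sesqForm τ ((g.map τ)ᵀ * j * g) u v := by
  simp only [sesqForm_apply, map_mulVec_comp, ← mulVec_mulVec, dotProduct_mulVec, vecMul_transpose]

theorem forall_sesqForm_mulVec_mulVec_iff {τ : K →+* K} {j g : Matrix ι ι K} :
    (∀ u v, sesqForm τ j (g *ᵥ u) (g *ᵥ v) = sesqForm τ j u v) ↔ (g.map τ)ᵀ * j * g = j := by
  simp only [sesqForm_mulVec_mulVec, ← LinearMap.ext_iff₂, EmbeddingLike.apply_eq_iff_eq]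

theorem map_sesqForm_of_transpose_map_eq_smul {τ : K →+* K} (hτ : Function.Involutive τ) {ε : K}
    {j : Matrix ι ι K} (hj : (j.map τ)ᵀ = ε • j) (u v : ι → K) :
    τ (sesqForm τ j u v) = ε * sesqForm τ j v u := by
  have hu : τ ∘ (τ ∘ u) = u := funext fun i ↦ hτ (u i)
  rw [sesqForm_apply, sesqForm_apply, RingHom.map_dotProduct, map_mulVec_comp, hu,
    dotProduct_mulVec, ← mulVec_transpose, hj, smul_mulVec, smul_dotProduct, smul_eq_mul,
    dotProduct_comm]

theorem map_sesqForm {σ τ : K →+* K} (hστ : Function.Commute σ τ) {j : Matrix ι ι K}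
    (hj : j.map σ = j) (u v : ι → K) :
    σ (sesqForm τ j u v) = sesqForm τ j (σ ∘ u) (σ ∘ v) := by
  have hu : σ ∘ (τ ∘ u) = τ ∘ (σ ∘ u) := funext fun i ↦ hστ (u i)
  rw [sesqForm_apply, sesqForm_apply, RingHom.map_dotProduct, map_mulVec_comp, hj, hu]

theorem sesqForm_twistedMulVec {σ τ : K →+* K} (hστ : Function.Commute σ τ) {j x : Matrix ι ι K}
    (hj : j.map σ = j) (hx : (x.map τ)ᵀ * j * x = j) (u v : ι → K) :
    sesqForm τ j (twistedMulVec σ x u) (twistedMulVec σ x v) = σ (sesqForm τ j u v) := by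
  rw [map_sesqForm hστ hj, twistedMulVec_apply, twistedMulVec_apply,
    forall_sesqForm_mulVec_mulVec_iff.2 hx]

theorem toMatrix'_mul_eq_mul_map_of_commute {σ : K →+* K} {x : Matrix ι ι K}
    {T : (ι → K) →ₗ[K] (ι → K)}
    (hT : ∀ v, T (twistedMulVec σ x v) = twistedMulVec σ x (T v)) :
    T.toMatrix' * x = x * T.toMatrix'.map σ := by
  refine ext_of_mulVec_single fun i ↦ ?_
  have hi : σ ∘ Pi.single i 1 = Pi.single i (1 : K) := by
    ext k
    simp [Pi.single_apply, apply_ite σ]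
  have h := hT (Pi.single i 1)
  rw [twistedMulVec_apply, twistedMulVec_apply, ← LinearMap.toMatrix'_mulVec T,
    ← LinearMap.toMatrix'_mulVec T, map_mulVec_comp, hi] at h
  rwa [← mulVec_mulVec, ← mulVec_mulVec]

end Matrices

section Orbits

variable {K : Type} [Field K] {n : ℕ} {σ τ : K →+* K} {j x g h : Matrix (Fin n) (Fin n) K}

theorem Gj.mul (hg : Gj τ j g) (hh : Gj τ j h) : Gj τ j (g * h) := by
  refine ⟨hg.1.mul hh.1, ?_⟩
  calc ((g * h).map τ)ᵀ * j * (g * h) = (h.map τ)ᵀ * ((g.map τ)ᵀ * j * g) * h := by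
        simp only [Matrix.map_mul, transpose_mul, Matrix.mul_assoc]
    _ = j := by rw [hg.2, hh.2]

theorem Gj.map_det_mul_det (hj : IsUnit j) (hg : Gj τ j g) : τ g.det * g.det = 1 := by
  have hdet := congrArg det hg.2
  rw [det_mul, det_mul, det_transpose, ← RingHom.mapMatrix_apply, ← RingHom.map_det] at hdet
  have hj0 : j.det ≠ 0 := ((isUnit_iff_isUnit_det j).1 hj).ne_zero
  exact mul_right_cancel₀ hj0 (by linear_combination hdet)

theorem det_twistedConj (σ : K →+* K) (g x : Matrix (Fin n) (Fin n) K) :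
    (g * x * (g.map σ)⁻¹).det = g.det * x.det * (σ g.det)⁻¹ := by
  rw [det_mul, det_mul, det_nonsing_inv, Ring.inverse_eq_inv', ← RingHom.mapMatrix_apply,
    ← RingHom.map_det]

theorem det_twistedConj_eq_iff (hg : IsUnit g) (hx : IsUnit x) :
    (g * x * (g.map σ)⁻¹).det = x.det ↔ σ g.det = g.det := by
  have hg0 : g.det ≠ 0 := ((isUnit_iff_isUnit_det g).1 hg).ne_zero
  have hx0 : x.det ≠ 0 := ((isUnit_iff_isUnit_det x).1 hx).ne_zero
  rw [det_twistedConj, mul_right_comm, mul_eq_right₀ hx0,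
    mul_inv_eq_one₀ ((map_ne_zero σ).2 hg0), eq_comm]

theorem twistedConj_mul_of_commute (hh : IsUnit h) (hhx : h * x = x * h.map σ)
    (g : Matrix (Fin n) (Fin n) K) :
    (g * h) * x * ((g * h).map σ)⁻¹ = g * x * (g.map σ)⁻¹ := by
  have hhσ : IsUnit (h.map σ).det := (isUnit_iff_isUnit_det _).1 (hh.map σ.mapMatrix)
  rw [Matrix.map_mul, Matrix.mul_inv_rev, Matrix.mul_assoc g h x, hhx, ← Matrix.mul_assoc,
    ← Matrix.mul_assoc, mul_nonsing_inv_cancel_right _ _ hhσ]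

theorem Gj.exists_stabilizer_det_eq (hτ : Function.Involutive τ) (hστ : Function.Commute σ τ)
    {ε : K} (hjσ : j.map σ = j) (hjτ : (j.map τ)ᵀ = ε • j) (hx : Gj τ j x) {v : Fin n → K}
    (hv : twistedMulVec σ x v = v) (hvv : sesqForm τ j v v ≠ 0) {c : K} (hσc : σ c = c)
    (hτc : τ c * c = 1) : ∃ h, Gj τ j h ∧ h.det = c ∧ h * x = x * h.map σ := by
  let T := quasiReflection (sesqForm τ j) v c
  have hdet : T.toMatrix'.det = c := by
    rw [LinearMap.det_toMatrix', det_quasiReflection hvv]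
  have hisom : (T.toMatrix'.map τ)ᵀ * j * T.toMatrix' = j :=
    forall_sesqForm_mulVec_mulVec_iff.1 fun u w ↦ by
      simpa only [LinearMap.toMatrix'_mulVec] using apply_quasiReflection_quasiReflection
        (map_sesqForm_of_transpose_map_eq_smul hτ hjτ) hvv hτc u w
  refine ⟨T.toMatrix', ⟨?_, hisom⟩, hdet, toMatrix'_mul_eq_mul_map_of_commute
    (quasiReflection_apply_fixed (sesqForm_twistedMulVec hστ hjσ hx.2) hv hσc)⟩
  rw [isUnit_iff_isUnit_det, hdet, isUnit_iff_ne_zero]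
  exact right_ne_zero_of_mul_eq_one hτc

theorem Gj.det_eq_one_of_isAlt (hj : IsUnit j) (hB : (sesqForm (RingHom.id K) j).IsAlt)
    (hg : Gj (RingHom.id K) j g) : g.det = 1 := by
  have hjs : (sesqForm (RingHom.id K) j).SeparatingLeft :=
    LinearMap.separatingLeft_toLinearMap₂'_iff_det_ne_zero.2
      ((isUnit_iff_isUnit_det j).1 hj).ne_zero
  rw [← LinearMap.det_toLin']
  exact GaloisPair.det_eq_one_of_isAlt hB hjs (forall_sesqForm_mulVec_mulVec_iff.2 hg.2)

theorem Gj.forall_det_eq_one_or_exists_anisotropic (hσ : Function.Involutive σ)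
    (hσ1 : σ ≠ RingHom.id K) (hτσ : τ ≠ σ) (hj : IsUnit j) (hx : x * x.map σ = 1) :
    (∀ g, Gj τ j g → g.det = 1) ∨
      ∃ v, twistedMulVec σ x v = v ∧ sesqForm τ j v v ≠ 0 := by
  refine or_iff_not_imp_right.2 fun hani g hg ↦ ?_
  push Not at hani
  rcases Nat.eq_zero_or_pos n with rfl | hn
  · exact det_fin_zero
  have : Nonempty (Fin n) := Fin.pos_iff_nonempty.1 hn
  have hB0 : sesqForm τ j ≠ 0 := (LinearEquiv.map_ne_zero_iff _).2 hj.ne_zero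
  obtain ⟨rfl, hB⟩ := eq_id_and_isAlt_of_forall_fixed_self_eq_zero hσ hσ1 hτσ
    (involutive_twistedMulVec hσ hx) hB0 hani
  exact hg.det_eq_one_of_isAlt hj hB

theorem orbSGj_iff_orbGj_and_det_eq (hσ : Function.Involutive σ) (hτ : Function.Involutive τ)
    (hστ : Function.Commute σ τ) (hσ1 : σ ≠ RingHom.id K) (hτσ : τ ≠ σ) {ε : K} (hj : IsUnit j)
    (hjσ : j.map σ = j) (hjτ : (j.map τ)ᵀ = ε • j) (hx : Xj σ τ j x)
    (x' : Matrix (Fin n) (Fin n) K) :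
    orbSGj σ τ j x x' ↔ orbGj σ τ j x x' ∧ x'.det = x.det := by
  constructor
  · rintro ⟨g, hg, hdet, rfl⟩
    exact ⟨⟨g, hg, rfl⟩, (det_twistedConj_eq_iff hg.1 hx.1.1).2 (by rw [hdet, map_one])⟩
  · rintro ⟨⟨g, hg, rfl⟩, hdet⟩
    obtain hone | ⟨v, hv, hvv⟩ :=
      Gj.forall_det_eq_one_or_exists_anisotropic hσ hσ1 hτσ hj hx.2
    · exact ⟨g, hg, hone g hg, rfl⟩
    have hσdet : σ g.det⁻¹ = g.det⁻¹ := by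
      rw [map_inv₀, (det_twistedConj_eq_iff hg.1 hx.1.1).1 hdet]
    have hτdet : τ g.det⁻¹ * g.det⁻¹ = 1 := by
      rw [map_inv₀, ← mul_inv, hg.map_det_mul_det hj, inv_one]
    obtain ⟨h, hh, hhdet, hhx⟩ := hx.1.exists_stabilizer_det_eq hτ hστ hjσ hjτ hv hvv hσdet hτdet
    have hgh : (g * h).det = 1 := by
      rw [det_mul, hhdet, mul_inv_cancel₀ (right_ne_zero_of_mul_eq_one (hg.map_det_mul_det hj))]
    exact ⟨g * h, hg.mul hh, hgh, (twistedConj_mul_of_commute hh.1 hhx g).symm⟩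

theorem orbGj.det_eq (hj : IsUnit j) (hx : IsUnit x) {x' : Matrix (Fin n) (Fin n) K}
    (h : orbGj σ (RingHom.id K) j x x') : x'.det = x.det := by
  obtain ⟨g, hg, rfl⟩ := h
  refine (det_twistedConj_eq_iff hg.1 hx).2 ?_
  have hdet_sq : g.det * g.det = 1 := hg.map_det_mul_det hj
  rcases mul_self_eq_one_iff.1 hdet_sq with hdet | hdet <;> simp [hdet]

end Orbits

end GaloisPair

theorem stmt_4_general {k : Type*} {K : Type} [CommSemiring k] [Field K] [Algebra k K]
    {σ τ : K ≃ₐ[k] K} (hσ2 : σ * σ = 1) (hτ2 : τ * τ = 1) (hcomm : σ * τ = τ * σ) (hσ1 : σ ≠ 1)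
    (hστ : σ ≠ τ) {ε : K} {n : ℕ} {j : Matrix (Fin n) (Fin n) K} (hjU : IsUnit j)
    (hjF : ∀ a b, σ (j a b) = j a b) (hjh : (j.map τ)ᵀ = ε • j) :
    (∀ x, Xj σ τ j x → ∀ x',
      (orbSGj σ τ j x x' ↔ (orbGj σ τ j x x' ∧ x'.det = x.det))) ∧
    (τ = 1 → ∀ x, Xj σ τ j x → ∀ x',
      (orbSGj σ τ j x x' ↔ orbGj σ τ j x x')) := by
  have hσ : Function.Involutive (σ : K →+* K) := DFunLike.congr_fun hσ2
  have hτ : Function.Involutive (τ : K →+* K) := DFunLike.congr_fun hτ2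
  have hcomm' : Function.Commute (σ : K →+* K) (τ : K →+* K) := DFunLike.congr_fun hcomm
  have hσ_ne_id : (σ : K →+* K) ≠ RingHom.id K := fun h ↦
    hσ1 (AlgEquiv.ext fun a ↦ DFunLike.congr_fun h a)
  have hτ_ne_σ : (τ : K →+* K) ≠ σ := fun h ↦
    hστ (AlgEquiv.ext fun a ↦ (DFunLike.congr_fun h a).symm)
  have horbit {x} (hx : Xj σ τ j x) (x') :
      orbSGj σ τ j x x' ↔ orbGj σ τ j x x' ∧ x'.det = x.det :=
    orbSGj_iff_orbGj_and_det_eq hσ hτ hcomm' hσ_ne_id hτ_ne_σ hjU (Matrix.ext hjF) hjh hx x'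
  refine ⟨fun _ hx ↦ horbit hx, ?_⟩
  rintro rfl x hx x'
  exact (horbit hx x').trans (and_iff_left_of_imp (orbGj.det_eq (σ := (σ : K →+* K)) hjU hx.1.1))

/-- Set `SG^j(E) = G^j(E) ∩ SL_n(E')`.  For every `x ∈ X^j` one has
`SG^j(E)·x = {x' ∈ G^j(E)·x : det x' = det x}`.  In particular, in the orthogonal case
(`τ = id`, `ε = 1`) one has `SG^j(E)·x = G^j(E)·x`. -/
theorem stmt_4 (p : ℕ) [Fact p.Prime]
    (E' : Type) [Field E'] [Algebra ℚ_[p] E'] [FiniteDimensional ℚ_[p] E']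
    (σ τ : E' ≃ₐ[ℚ_[p]] E')
    (hσ2 : σ * σ = 1) (hτ2 : τ * τ = 1) (hcomm : σ * τ = τ * σ)
    (hσ1 : σ ≠ 1)
    (hcase : (τ ≠ 1 ∧ σ ≠ τ) ∨ τ = 1)
    (ε : E') (hε : ε = 1 ∨ ε = -1)
    (n : ℕ) (hn : 1 ≤ n)
    (hsymp : τ = 1 → ε = -1 → Even n)
    (j : Matrix (Fin n) (Fin n) E')
    (hjU : IsUnit j) (hjF : ∀ a b, σ (j a b) = j a b) (hjh : (j.map ⇑τ)ᵀ = ε • j) :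
    (∀ x, Xj ⇑σ ⇑τ j x → ∀ x',
      (orbSGj ⇑σ ⇑τ j x x' ↔ (orbGj ⇑σ ⇑τ j x x' ∧ x'.det = x.det))) ∧
    (τ = 1 → ε = 1 → ∀ x, Xj ⇑σ ⇑τ j x → ∀ x',
      (orbSGj ⇑σ ⇑τ j x x' ↔ orbGj ⇑σ ⇑τ j x x')) := by
  have hστ : σ ≠ τ := hcase.elim And.right fun hτ1 ↦ hτ1 ▸ hσ1
  exact (stmt_4_general hσ2 hτ2 hcomm hσ1 hστ hjU hjF hjh).imp_right fun horth hτ1 _ ↦ horth hτ1
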